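/- Let f be a binary quartic with Δ(f) ≠ 0 and I3(f) ≠ 0, let μ_{ij} be scalars with z_1^i z_2^j − μ_{ij}·H(f) ∈ J(f), let A_f be the associated quartic of f, and set g := Δ(f)·A_f. Then Δ(g) ≠ 0, and for any scalars ν_{ij} with z_1^i z_2^j − ν_{ij}·H(g) ∈ J(g) and associated quartic A_g := Σ_{i+j=4} (24/(i!·j!))·ν_{ij}·z_1^i z_2^j, one has Δ(g)·A_g = −(I3(f)·Δ(f)²/(2²⁰·3⁶))·f. In particular, the map f ↦ A_f is an involution up to scale on nondegenerate binary quartics with nonvanishing catalecticant. -/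

import Mathlib

/-!
The degree-four part of `J(f)` is spanned by `z_i f_j`, four vectors in the five-dimensional space of
quartics, so a functional on quartics that kills it is given by the signed maximal minors of the
resulting `4 × 5` matrix. Let `m₀, …, m₄` be these minors, normalised. The functional with values `m_k` on
`z_1^(4-k) z_2^k` (`minorFunctional`) vanishes on all of `J(f)`
(`minorFunctional_eq_zero_of_mem_jac`) and takes the value `Δ(f)` on `H(f)` (`minorFunctional_hess`).
Applying it to `z_1^i z_2^j - μ_{ij} H(f) ∈ J(f)` gives `Δ(f) μ_{ij} = m_j`, so `Δ(f) A_f` is the quartic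
`m₀ z_1⁴ + 4 m₁ z_1³z_2 + 6 m₂ z_1²z_2² + 4 m₃ z_1z_2³ + m₄ z_2⁴`, whose coefficients are polynomials in
those of `f` (`disc_mul_assocQuartic`).

The theorem thus reduces to polynomial identities. The invariants of `g = Δ(f) A_f` are
`I2(g) = I2(f) Δ(f) / 6912` and `I3(g) = -Δ(f)² / 2985984`, whence `Δ(g) = I3(f)² Δ(f)³ / (2²⁴ 3⁶) ≠ 0`
(`disc_minors`); and taking minors a second time gives `-(I3(f) Δ(f)² / (2²⁰ 3⁶)) f`.
-/

open MvPolynomial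

noncomputable section

/-- Binary forms: polynomials in two variables over ℂ. -/
abbrev P2 := MvPolynomial (Fin 2) ℂ

/-- The coefficient of `z_1^i z_2^j` in a binary form. -/
def cf (f : P2) (i j : ℕ) : ℂ :=
  coeff (Finsupp.single 0 i + Finsupp.single 1 j) f

/-- The invariant `I2(f) = ae − 4bd + 3c²` of a binary quartic
`f = a·z_1⁴ + 4b·z_1³z_2 + 6c·z_1²z_2² + 4d·z_1z_2³ + e·z_2⁴`. -/
def I2 (f : P2) : ℂ :=
  cf f 4 0 * cf f 0 4 - 4 * (cf f 3 1 / 4) * (cf f 1 3 / 4) + 3 * (cf f 2 2 / 6) ^ 2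

/-- The invariant `I3(f) = ace + 2bcd − ad² − b²e − c³` (the catalecticant). -/
def I3 (f : P2) : ℂ :=
  cf f 4 0 * (cf f 2 2 / 6) * cf f 0 4 +
    2 * (cf f 3 1 / 4) * (cf f 2 2 / 6) * (cf f 1 3 / 4) -
    cf f 4 0 * (cf f 1 3 / 4) ^ 2 - (cf f 3 1 / 4) ^ 2 * cf f 0 4 - (cf f 2 2 / 6) ^ 3

/-- The discriminant `Δ(f) = I2(f)³ − 27·I3(f)²` of a binary quartic. -/
def disc (f : P2) : ℂ := I2 f ^ 3 - 27 * I3 f ^ 2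

/-- The Hessian determinant `H(f) = f_{11}f_{22} − f_{12}²`. -/
def hess (f : P2) : P2 :=
  pderiv 0 (pderiv 0 f) * pderiv 1 (pderiv 1 f) - pderiv 0 (pderiv 1 f) ^ 2

/-- The Jacobian ideal `J(f) = (f_1, f_2)`. -/
def jac (f : P2) : Ideal P2 := Ideal.span {pderiv 0 f, pderiv 1 f}

/-- The binary quartic `a·z_1⁴ + 4b·z_1³z_2 + 6c·z_1²z_2² + 4d·z_1z_2³ + e·z_2⁴`. -/
def quartic (a b c d e : ℂ) : P2 :=
  MvPolynomial.C a * X 0 ^ 4 + MvPolynomial.C (4 * b) * X 0 ^ 3 * X 1 +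
    MvPolynomial.C (6 * c) * X 0 ^ 2 * X 1 ^ 2 + MvPolynomial.C (4 * d) * X 0 * X 1 ^ 3 +
    MvPolynomial.C e * X 1 ^ 4

/-- The associated quartic `A_f := Σ_{i+j=4} (24/(i!·j!))·μ_{ij}·z_1^i z_2^j`
built from scalars `μ_{ij}`. -/
def assocQuartic (μ : ℕ → ℕ → ℂ) : P2 :=
  ∑ i ∈ Finset.range 5,
    MvPolynomial.C ((24 : ℂ) / ((i.factorial : ℂ) * ((4 - i).factorial : ℂ))) *
      MvPolynomial.C (μ i (4 - i)) * X 0 ^ i * X 1 ^ (4 - i)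

/-- The substitution `(z_1, z_2) ↦ (−z_2, z_1)`, i.e. `g ↦ g(−z_2, z_1)`. -/
def twist (g : P2) : P2 := aeval ![-(X 1 : P2), X 0] g

/-! The matrix in question has as rows the coefficients of `z_1 f_1 / 4`, `z_2 f_1 / 4`, `z_1 f_2 / 4`,
`z_2 f_2 / 4` in the basis `z_1⁴, z_1³z_2, …, z_2⁴`. Dividing its minors by `144` makes the resulting
functional take the value `Δ(f)` on `H(f)`. -/

/-- The minor omitting the column of `z_1⁴`, over `144`. -/
def m0 (a b c d e : ℂ) : ℂ :=
  (9*b^2*e^2 - 42*b*c*d*e + 24*b*d^3 - 3*a*c*e^2 + 27*c^3*e - 18*c^2*d^2 + 3*a*d^2*e) / 144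

/-- The minor omitting the column of `z_1³z_2`, negated, over `144`. -/
def m1 (a b c d e : ℂ) : ℂ :=
  (-3*a*b*e^2 + 12*a*c*d*e - 9*a*d^3 - 9*b*c^2*e + 6*b*c*d^2 + 3*b^2*d*e) / 144

/-- The minor omitting the column of `z_1²z_2²`, over `144`. -/
def m2 (a b c d e : ℂ) : ℂ :=
  (a^2*e^2 - 9*a*c^2*e + 9*a*c*d^2 - 2*a*b*d*e + 9*b^2*c*e - 8*b^2*d^2) / 144

/-- The minor omitting the column of `z_1z_2³`, negated, over `144`. -/
def m3 (a b c d e : ℂ) : ℂ :=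
  (-3*a^2*d*e + 12*a*b*c*e - 9*a*c^2*d + 3*a*b*d^2 - 9*b^3*e + 6*b^2*c*d) / 144

/-- The minor omitting the column of `z_2⁴`, over `144`. -/
def m4 (a b c d e : ℂ) : ℂ :=
  (9*a^2*d^2 - 3*a^2*c*e - 42*a*b*c*d + 3*a*b^2*e + 27*a*c^3 + 24*b^3*d - 18*b^2*c^2) / 144

/-- The linear functional on polynomials that depends only on the degree-four part and takes the value
`m_k` on `z_1^(4-k) z_2^k`. -/
def minorFunctional (a b c d e : ℂ) (p : P2) : ℂ :=
  m0 a b c d e * cf p 4 0 + m1 a b c d e * cf p 3 1 + m2 a b c d e * cf p 2 2 +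
    m3 a b c d e * cf p 1 3 + m4 a b c d e * cf p 0 4

lemma cf_add (p q : P2) (i j : ℕ) : cf (p + q) i j = cf p i j + cf q i j := by
  simp [cf]

lemma cf_sub (p q : P2) (i j : ℕ) : cf (p - q) i j = cf p i j - cf q i j := by
  simp [cf]

lemma cf_C_mul (t : ℂ) (p : P2) (i j : ℕ) : cf (C t * p) i j = t * cf p i j := by
  simp [cf]

lemma cf_mul_C (t : ℂ) (p : P2) (i j : ℕ) : cf (p * C t) i j = cf p i j * t := by
  rw [mul_comm, cf_C_mul, mul_comm]

lemma cf_one (i j : ℕ) : cf 1 i j = if i = 0 ∧ j = 0 then 1 else 0 := by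
  classical
  rw [cf, coeff_one]
  congr 1
  simp [Finsupp.ext_iff, Fin.forall_fin_two, eq_comm]

lemma cf_mul_X0 (p : P2) (i j : ℕ) : cf (p * X 0) i j = if i = 0 then 0 else cf p (i - 1) j := by
  classical
  rw [cf, coeff_mul_X']
  rcases i with _ | i
  · simp
  · have h : (Finsupp.single 0 (i + 1) + Finsupp.single 1 j - Finsupp.single 0 1 : Fin 2 →₀ ℕ) =
        Finsupp.single 0 i + Finsupp.single 1 j := by
      ext k; fin_cases k <;> simp
    rw [h]
    simp [cf]

lemma cf_mul_X1 (p : P2) (i j : ℕ) : cf (p * X 1) i j = if j = 0 then 0 else cf p i (j - 1) := by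
  classical
  rw [cf, coeff_mul_X']
  rcases j with _ | j
  · simp
  · have h : (Finsupp.single 0 i + Finsupp.single 1 (j + 1) - Finsupp.single 1 1 : Fin 2 →₀ ℕ) =
        Finsupp.single 0 i + Finsupp.single 1 j := by
      ext k; fin_cases k <;> simp
    rw [h]
    simp [cf]

lemma cf_C (t : ℂ) (i j : ℕ) : cf (C t) i j = if i = 0 ∧ j = 0 then t else 0 := by
  have h := cf_C_mul t 1 i j
  rw [mul_one, cf_one] at h
  simp [h]

lemma cf_quartic (a b c d e : ℂ) :
    cf (quartic a b c d e) 4 0 = a ∧ cf (quartic a b c d e) 3 1 = 4 * b ∧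
    cf (quartic a b c d e) 2 2 = 6 * c ∧ cf (quartic a b c d e) 1 3 = 4 * d ∧
    cf (quartic a b c d e) 0 4 = e := by
  simp only [quartic, pow_succ, pow_zero, one_mul, ← mul_assoc, cf_add, cf_mul_X0, cf_mul_X1, cf_C]
  norm_num

lemma I2_quartic (a b c d e : ℂ) : I2 (quartic a b c d e) = a * e - 4 * b * d + 3 * c ^ 2 := by
  obtain ⟨h0, h1, h2, h3, h4⟩ := cf_quartic a b c d e
  rw [I2, h0, h1, h2, h3, h4]; ring

lemma I3_quartic (a b c d e : ℂ) : I3 (quartic a b c d e) =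
    a * c * e + 2 * b * c * d - a * d ^ 2 - b ^ 2 * e - c ^ 3 := by
  obtain ⟨h0, h1, h2, h3, h4⟩ := cf_quartic a b c d e
  rw [I3, h0, h1, h2, h3, h4]; ring

lemma pderiv_zero_quartic (a b c d e : ℂ) : pderiv 0 (quartic a b c d e) =
    C (4 * a) * X 0 ^ 3 + C (12 * b) * X 0 ^ 2 * X 1 + C (12 * c) * X 0 * X 1 ^ 2 +
      C (4 * d) * X 1 ^ 3 := by
  simp [quartic, pderiv_X]
  simp only [map_ofNat]
  ring

lemma pderiv_one_quartic (a b c d e : ℂ) : pderiv 1 (quartic a b c d e) =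
    C (4 * b) * X 0 ^ 3 + C (12 * c) * X 0 ^ 2 * X 1 + C (12 * d) * X 0 * X 1 ^ 2 +
      C (4 * e) * X 1 ^ 3 := by
  simp [quartic, pderiv_X]
  simp only [map_ofNat]
  ring

lemma hess_quartic (a b c d e : ℂ) : hess (quartic a b c d e) =
    quartic (144 * (a * c - b ^ 2)) (72 * (a * d - b * c)) (24 * (a * e + 2 * b * d - 3 * c ^ 2))
      (72 * (b * e - c * d)) (144 * (c * e - d ^ 2)) := by
  rw [hess, pderiv_zero_quartic, pderiv_one_quartic]
  simp [quartic, pderiv_X]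
  simp only [map_ofNat]
  ring

lemma minorFunctional_sub (a b c d e : ℂ) (p q : P2) : minorFunctional a b c d e (p - q) =
    minorFunctional a b c d e p - minorFunctional a b c d e q := by
  simp only [minorFunctional, cf_sub]; ring

lemma minorFunctional_C_mul (a b c d e t : ℂ) (p : P2) : minorFunctional a b c d e (C t * p) =
    t * minorFunctional a b c d e p := by
  simp only [minorFunctional, cf_C_mul]; ring

/-- Only the linear part of a multiplier `r` contributes to the degree-four part of `r * f_i`, and the
minors are orthogonal to the rows `z_j f_i`. -/
lemma minorFunctional_eq_zero_of_mem_jac (a b c d e : ℂ) (p : P2)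
    (hp : p ∈ jac (quartic a b c d e)) : minorFunctional a b c d e p = 0 := by
  obtain ⟨r, s, rfl⟩ := Ideal.mem_span_pair.mp hp
  rw [pderiv_zero_quartic, pderiv_one_quartic]
  simp only [minorFunctional, mul_add, pow_succ, pow_zero, one_mul, ← mul_assoc, cf_add, cf_mul_X0,
    cf_mul_X1, cf_mul_C]
  norm_num
  simp only [m0, m1, m2, m3, m4]
  ring

/-- The functional does not vanish on the Hessian of a nondegenerate quartic, so it determines the
scalars `μ_{ij}`. -/
lemma minorFunctional_hess (a b c d e : ℂ) :
    minorFunctional a b c d e (hess (quartic a b c d e)) = disc (quartic a b c d e) := by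
  rw [hess_quartic, disc, I2_quartic, I3_quartic, minorFunctional]
  obtain ⟨h0, h1, h2, h3, h4⟩ := cf_quartic (144 * (a * c - b ^ 2)) (72 * (a * d - b * c))
    (24 * (a * e + 2 * b * d - 3 * c ^ 2)) (72 * (b * e - c * d)) (144 * (c * e - d ^ 2))
  rw [h0, h1, h2, h3, h4]
  simp only [m0, m1, m2, m3, m4]
  ring

/-- `Δ(f) A_f` is a polynomial expression in the coefficients of `f`, also when `Δ(f) = 0`. -/
lemma disc_mul_assocQuartic (a b c d e : ℂ) (μ : ℕ → ℕ → ℂ)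
    (hμ : ∀ i j : ℕ, i + j = 4 →
      X 0 ^ i * X 1 ^ j - C (μ i j) * hess (quartic a b c d e) ∈ jac (quartic a b c d e)) :
    C (disc (quartic a b c d e)) * assocQuartic μ =
      quartic (m0 a b c d e) (m1 a b c d e) (m2 a b c d e) (m3 a b c d e) (m4 a b c d e) := by
  -- The factor `1` lets the coefficient rules for `p * X _` strip every variable.
  have key : ∀ i j : ℕ, i + j = 4 →
      minorFunctional a b c d e (1 * X 0 ^ i * X 1 ^ j) = μ i j * disc (quartic a b c d e) := by
    intro i j hij
    have h := minorFunctional_eq_zero_of_mem_jac a b c d e _ (hμ i j hij)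
    rw [minorFunctional_sub, minorFunctional_C_mul, minorFunctional_hess] at h
    rw [one_mul]
    exact sub_eq_zero.mp h
  have k0 := key 4 0 rfl
  have k1 := key 3 1 rfl
  have k2 := key 2 2 rfl
  have k3 := key 1 3 rfl
  have k4 := key 0 4 rfl
  simp only [minorFunctional, pow_succ, pow_zero, mul_one, ← mul_assoc, cf_mul_X0, cf_mul_X1,
    cf_one] at k0 k1 k2 k3 k4
  norm_num at k0 k1 k2 k3 k4
  rw [k0, k1, k2, k3, k4]
  simp only [assocQuartic, quartic, Finset.sum_range_succ, Finset.sum_range_zero]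
  norm_num [Nat.factorial]
  ring

/-- `Δ(Δ(f) A_f) = I3(f)² Δ(f)³ / (2²⁴ 3⁶)`. -/
lemma disc_minors (a b c d e : ℂ) :
    disc (quartic (m0 a b c d e) (m1 a b c d e) (m2 a b c d e) (m3 a b c d e) (m4 a b c d e)) =
      I3 (quartic a b c d e) ^ 2 * disc (quartic a b c d e) ^ 3 / (2 ^ 24 * 3 ^ 6) := by
  have h2 : I2 (quartic (m0 a b c d e) (m1 a b c d e) (m2 a b c d e) (m3 a b c d e)
      (m4 a b c d e)) = I2 (quartic a b c d e) * disc (quartic a b c d e) / 6912 := by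
    simp only [disc, I2_quartic, I3_quartic, m0, m1, m2, m3, m4]
    ring
  have h3 : I3 (quartic (m0 a b c d e) (m1 a b c d e) (m2 a b c d e) (m3 a b c d e)
      (m4 a b c d e)) = -disc (quartic a b c d e) ^ 2 / 2985984 := by
    simp only [disc, I2_quartic, I3_quartic, m0, m1, m2, m3, m4]
    ring
  rw [disc, h2, h3, disc]
  ring

lemma C_mul_quartic (t a b c d e : ℂ) :
    C t * quartic a b c d e = quartic (t * a) (t * b) (t * c) (t * d) (t * e) := by
  simp only [quartic, map_mul]
  ring

/-- the associated form construction is an involution up to scale on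
nondegenerate binary quartics with nonvanishing catalecticant:
with `g := Δ(f)·A_f`, one has `Δ(g) ≠ 0` and `Δ(g)·A_g = −(I3(f)·Δ(f)²/(2²⁰·3⁶))·f`. -/
theorem assoc_quartic_involution (a b c d e : ℂ) (f : P2)
    (hf : f = quartic a b c d e) (hΔ : disc f ≠ 0) (hI3 : I3 f ≠ 0)
    (μ : ℕ → ℕ → ℂ)
    (hμ : ∀ i j : ℕ, i + j = 4 →
      X 0 ^ i * X 1 ^ j - MvPolynomial.C (μ i j) * hess f ∈ jac f)
    (g : P2) (hg : g = MvPolynomial.C (disc f) * assocQuartic μ) :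
    disc g ≠ 0 ∧
    ∀ ν : ℕ → ℕ → ℂ,
      (∀ i j : ℕ, i + j = 4 →
        X 0 ^ i * X 1 ^ j - MvPolynomial.C (ν i j) * hess g ∈ jac g) →
      MvPolynomial.C (disc g) * assocQuartic ν =
        MvPolynomial.C (-(I3 f * disc f ^ 2 / (2 ^ 20 * 3 ^ 6))) * f := by
  subst hf
  rw [disc_mul_assocQuartic a b c d e μ hμ] at hg
  subst hg
  refine ⟨?_, fun ν hν => ?_⟩
  · rw [disc_minors]
    exact div_ne_zero (mul_ne_zero (pow_ne_zero _ hI3) (pow_ne_zero _ hΔ)) (by norm_num)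
  · rw [disc_mul_assocQuartic _ _ _ _ _ ν hν, C_mul_quartic, disc, I2_quartic, I3_quartic]
    congr 1 <;> simp only [m0, m1, m2, m3, m4] <;> ring

end
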